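/- Under the anchored Popov method with β_k = 1/(k+2), the parameter update η_{k+1} = (1−β_k²−Mη_k²)β_{k+1}η_k/((1−Mη_k²)(1−β_k)β_k), M = 4L², 0 < η_0 ≤ 1/(2L√3), and y_{−1} = x_0, the iterates of the scheme y_k = β_k x_0 + (1−β_k)x_k − η_k G(y_{k−1}), x_{k+1} = β_k x_0 + (1−β_k)x_k − η_k G(y_k) applied to a monotone L-Lipschitz G with zero x⋆ satisfy ‖G(x_k)‖² + 2L²‖x_k − y_{k−1}‖² ≤ (4/(η⋆(k+1)(k+2)))[η_0‖G(x_0)‖² + (1/η⋆)‖x_0 − x⋆‖²], where η⋆ = lim η_k > 0. -/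

import Mathlib

open Filter Topology
open scoped InnerProductSpace

/-!
The proof rests on the Lyapunov function
`V k = (k+1)(k+2) η_k / 2 * (‖G x_k‖² + L² ‖x_k - y_{k-1}‖²) + (k+1) ⟪G x_k, x_k - x_0⟫`.
With `m = 4 L² η_k²` and `e = 1/(k+1)`, the parameter update says that the weight
`(k+1)(k+2) η_k / 2` is multiplied at each step by `r = 1 + 2e - e² m/(1-m)`. Monotonicity of `G`
along `x_{k+1} - x_k` controls the inner product terms, and the Lipschitz bound for
`x_{k+1} - y_k = η_k (G y_{k-1} - G y_k)` reduces the descent `V (k+1) ≤ V k` to the nonnegativity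
of a quadratic form in `G x_{k+1}` and `G y_k`; for this value of `r` it is a sum of two squares up
to a positive factor. Monotonicity at the zero of `G` and Young's inequality then bound `V` from
below.

The update also reads `η_{k+1} = η_k (1 - m/(1-m) / ((k+1)(k+3)))`. As soon as `η_1 > 0` one has
`m/(1-m) < 3`, hence `η_{k+1} ≥ η_k k(k+4) / ((k+1)(k+3))`; this product telescopes, so `η` stays
above `η_1 / 4`.
-/

/-- A parameter sequence of the anchored Popov method with `β_k = 1/(k+2)`: it obeys the method's
update and starts below the threshold `M η_0² = 3/4`, at which the update gives `η_1 = 0`. -/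
structure IsPopovStepsize (M : ℝ) (η : ℕ → ℝ) : Prop where
  zero_pos : 0 < η 0
  mul_sq_zero_lt : M * η 0 ^ 2 < 3 / 4
  succ_eq : ∀ k : ℕ, η (k + 1) =
    (1 - (1 / ((k : ℝ) + 2)) ^ 2 - M * η k ^ 2) * (1 / ((k : ℝ) + 3)) * η k /
      ((1 - M * η k ^ 2) * (1 - 1 / ((k : ℝ) + 2)) * (1 / ((k : ℝ) + 2)))

namespace IsPopovStepsize

variable {M : ℝ} {η : ℕ → ℝ}

lemma succ_eq_mul (hη : IsPopovStepsize M η) {k : ℕ} (hk : M * η k ^ 2 < 1) :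
    η (k + 1) = η k * (1 - M * η k ^ 2 / (1 - M * η k ^ 2) / (((k : ℝ) + 1) * (k + 3))) := by
  have : 1 - M * η k ^ 2 ≠ 0 := by linarith
  have hβ : (1 : ℝ) - 1 / ((k : ℝ) + 2) = (k + 1) / (k + 2) := by field_simp; ring
  rw [hη.succ_eq k, hβ]
  field_simp
  ring

lemma succ_le_of_pos (hη : IsPopovStepsize M η) (hM : 0 ≤ M) {k : ℕ} (hpos : 0 < η k)
    (hk : M * η k ^ 2 < 1) : η (k + 1) ≤ η k := by
  rw [hη.succ_eq_mul hk]
  have : 0 < 1 - M * η k ^ 2 := by linarith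
  exact mul_le_of_le_one_right hpos.le (sub_le_self _ (by positivity))

lemma mul_lt_mul_succ (hη : IsPopovStepsize M η) {k : ℕ} (hpos : 0 < η k)
    (hk : M * η k ^ 2 < 3 / 4) :
    (k : ℝ) * (k + 4) * η k < (k + 1) * (k + 3) * η (k + 1) := by
  have hratio : M * η k ^ 2 / (1 - M * η k ^ 2) < 3 := by
    rw [div_lt_iff₀ (by linarith)]; linarith
  rw [hη.succ_eq_mul (by linarith)]
  calc (k : ℝ) * (k + 4) * η k = ((k + 1) * (k + 3) - 3) * η k := by ring
    _ < ((k + 1) * (k + 3) - M * η k ^ 2 / (1 - M * η k ^ 2)) * η k := by gcongr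
    _ = _ := by field_simp

lemma pos_and_mul_sq_lt (hη : IsPopovStepsize M η) (hM : 0 ≤ M) (k : ℕ) :
    0 < η k ∧ M * η k ^ 2 < 3 / 4 := by
  induction k with
  | zero => exact ⟨hη.zero_pos, hη.mul_sq_zero_lt⟩
  | succ k ih =>
    obtain ⟨hpos, hk⟩ := ih
    have hsucc : 0 < η (k + 1) :=
      pos_of_mul_pos_right ((by positivity : 0 ≤ (k : ℝ) * (k + 4) * η k).trans_lt
        (hη.mul_lt_mul_succ hpos hk)) (by positivity)
    have hle := hη.succ_le_of_pos hM hpos (by linarith)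
    exact ⟨hsucc, lt_of_le_of_lt (by gcongr) hk⟩

lemma antitone (hη : IsPopovStepsize M η) (hM : 0 ≤ M) : Antitone η :=
  antitone_nat_of_succ_le fun k ↦
    have ⟨hpos, hk⟩ := hη.pos_and_mul_sq_lt hM k
    hη.succ_le_of_pos hM hpos (by linarith)

lemma add_four_mul_one_le (hη : IsPopovStepsize M η) (hM : 0 ≤ M) (k : ℕ) :
    ((k : ℝ) + 4) * η 1 ≤ 4 * (k + 1) * η (k + 1) := by
  induction k with
  | zero => norm_num
  | succ k ih =>
    obtain ⟨hpos, hlt⟩ := hη.pos_and_mul_sq_lt hM (k + 1)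
    have hstep := hη.mul_lt_mul_succ hpos hlt
    push_cast at hstep ⊢
    refine le_of_mul_le_mul_left ?_ (by positivity : (0 : ℝ) < k + 4)
    calc ((k : ℝ) + 4) * ((k + 1 + 4) * η 1) = (k + 5) * ((k + 4) * η 1) := by ring
      _ ≤ (k + 5) * (4 * (k + 1) * η (k + 1)) := by gcongr
      _ ≤ ((k : ℝ) + 4) * (4 * (k + 1 + 1) * η (k + 1 + 1)) := by linarith

lemma one_div_four_le (hη : IsPopovStepsize M η) (hM : 0 ≤ M) (k : ℕ) : η 1 / 4 ≤ η k := by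
  have hone := (hη.pos_and_mul_sq_lt hM 1).1
  have hbound := hη.add_four_mul_one_le hM k
  have hsucc : η 1 / 4 ≤ η (k + 1) := by
    refine le_of_mul_le_mul_left ?_ (by positivity : (0 : ℝ) < 4 * (k + 1))
    linarith
  exact hsucc.trans (hη.antitone hM k.le_succ)

lemma exists_tendsto (hη : IsPopovStepsize M η) (hM : 0 ≤ M) :
    ∃ ηs : ℝ, 0 < ηs ∧ Tendsto η atTop (𝓝 ηs) ∧ ∀ k, ηs ≤ η k := by
  have hone := (hη.pos_and_mul_sq_lt hM 1).1
  have hbdd : BddBelow (Set.range η) := ⟨η 1 / 4, Set.forall_mem_range.2 (hη.one_div_four_le hM)⟩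
  exact ⟨⨅ k, η k, (by positivity : 0 < η 1 / 4).trans_le (le_ciInf (hη.one_div_four_le hM)),
    tendsto_atTop_ciInf (hη.antitone hM) hbdd, ciInf_le hbdd⟩

end IsPopovStepsize

lemma four_mul_sq_mul_sq_le {L t : ℝ} (hL : 0 < L) (ht : 0 ≤ t) (h : t ≤ 1 / (2 * L * √3)) :
    4 * L ^ 2 * t ^ 2 ≤ 1 / 3 :=
  calc 4 * L ^ 2 * t ^ 2 ≤ 4 * L ^ 2 * (1 / (2 * L * √3)) ^ 2 := by gcongr
    _ = 1 / 3 := by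
      rw [div_pow, mul_pow, Real.sq_sqrt zero_le_three]
      field_simp
      norm_num

/-- The factor by which the weight of the Lyapunov function grows in one step of the anchored Popov
method, where `m = M η_k²` and `e = 1/(k+1)`. -/
noncomputable def popovGrowth (m e : ℝ) : ℝ := 1 + 2 * e - e ^ 2 * (m / (1 - m))

lemma IsPopovStepsize.weight_succ {M : ℝ} {η : ℕ → ℝ} (hη : IsPopovStepsize M η) {k : ℕ}
    (hk : M * η k ^ 2 < 1) :
    ((k : ℝ) + 2) * (k + 3) * η (k + 1) / 2 =
      ((k : ℝ) + 1) * (k + 2) * η k / 2 * popovGrowth (M * η k ^ 2) (1 / ((k : ℝ) + 1)) := by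
  rw [hη.succ_eq_mul hk, popovGrowth]
  generalize M * η k ^ 2 / (1 - M * η k ^ 2) = d
  field_simp
  ring

lemma mul_popovGrowth_le_one {m : ℝ} (hm : m < 1) (e : ℝ) : m * popovGrowth m e ≤ 1 := by
  have hm' : 0 < 1 - m := sub_pos.2 hm
  have hsq : 1 - m * popovGrowth m e = (1 - m - m * e) ^ 2 / (1 - m) := by
    rw [popovGrowth]; field_simp; ring
  rw [← sub_nonneg, hsq]
  positivity

lemma norm_sub_sq_le_two_mul {E : Type*} [SeminormedAddCommGroup E] (u v w : E) :
    ‖v - w‖ ^ 2 ≤ 2 * (‖u - v‖ ^ 2 + ‖u - w‖ ^ 2) := by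
  have htri : ‖v - w‖ ≤ ‖u - v‖ + ‖u - w‖ := by
    simpa only [norm_sub_rev v u] using norm_sub_le_norm_sub_add_norm_sub v u w
  exact (pow_le_pow_left₀ (norm_nonneg _) htri 2).trans add_sq_le

section InnerProductSpace

variable {E : Type*} [NormedAddCommGroup E] [InnerProductSpace ℝ E]

lemma popovGrowth_form_le {m : ℝ} (hm : m < 1) (e : ℝ) (u w : E) :
    m * (‖w‖ ^ 2 + popovGrowth m e * ‖u‖ ^ 2 - 2 * (1 + e) * ⟪u, w⟫_ℝ) ≤
      (2 - m * popovGrowth m e) * ‖u - w‖ ^ 2 := by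
  have hm' : 0 < 1 - m := sub_pos.2 hm
  set g := 1 - m - m * e with hg
  have hsquares : (2 - m * popovGrowth m e) * ‖u - w‖ ^ 2 -
      m * (‖w‖ ^ 2 + popovGrowth m e * ‖u‖ ^ 2 - 2 * (1 + e) * ⟪u, w⟫_ℝ) =
      (‖(m * e) • w - g • (u - w)‖ ^ 2 + ‖g • (u - w)‖ ^ 2) / (1 - m) := by
    rw [norm_sub_sq_real ((m * e) • w), norm_smul, norm_smul, mul_pow, mul_pow, Real.norm_eq_abs,
      Real.norm_eq_abs, sq_abs, sq_abs, real_inner_smul_left, real_inner_smul_right,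
      inner_sub_right, real_inner_self_eq_norm_sq, real_inner_comm u w, norm_sub_sq_real u w,
      popovGrowth, hg]
    field_simp
    ring
  rw [← sub_nonneg, hsquares]
  positivity

lemma popov_quadratic_le {m : ℝ} (hm0 : 0 < m) (hm : m < 1) (e : ℝ) {u v u' w : E}
    (h : ‖u' - w‖ ^ 2 ≤ m / 4 * ‖v - w‖ ^ 2) :
    popovGrowth m e * (‖u'‖ ^ 2 + m / 4 * ‖v - w‖ ^ 2) +
      2 * (⟪u, w⟫_ℝ - (1 + e) * ⟪u', w⟫_ℝ) ≤ ‖u‖ ^ 2 + ‖u - v‖ ^ 2 := by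
  set r := popovGrowth m e
  have hr1 : m * r ≤ 1 := mul_popovGrowth_le_one hm e
  have hform : m * (‖w‖ ^ 2 + r * ‖u'‖ ^ 2 - 2 * (1 + e) * ⟪u', w⟫_ℝ) ≤
      m * ((2 - m * r) / 4 * ‖v - w‖ ^ 2) :=
    calc _ ≤ (2 - m * r) * ‖u' - w‖ ^ 2 := popovGrowth_form_le hm e u' w
      _ ≤ (2 - m * r) * (m / 4 * ‖v - w‖ ^ 2) := by gcongr; linarith
      _ = _ := by ring
  have hform' := le_of_mul_le_mul_left hform hm0
  have hpar := norm_sub_sq_le_two_mul u v w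
  have huw := norm_sub_sq_real u w
  linarith

/-- The anchored Popov iteration for `G` with anchor `x 0`, parameters `η` and `β_k = 1/(k+2)`.
The extrapolated points are shifted by one: `y k` is `y_{k-1}` in the usual notation. -/
structure IsAnchoredPopov (G : E → E) (η : ℕ → ℝ) (x y : ℕ → E) : Prop where
  y_zero : y 0 = x 0
  y_succ : ∀ k : ℕ, y (k + 1) =
    (1 / ((k : ℝ) + 2)) • x 0 + (1 - 1 / ((k : ℝ) + 2)) • x k - η k • G (y k)
  x_succ : ∀ k : ℕ, x (k + 1) =
    (1 / ((k : ℝ) + 2)) • x 0 + (1 - 1 / ((k : ℝ) + 2)) • x k - η k • G (y (k + 1))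

/-- The Lyapunov function of the anchored Popov iteration, with `y k` standing for `y_{k-1}` as in
`IsAnchoredPopov`. -/
noncomputable def popovLyapunov (G : E → E) (L : ℝ) (η : ℕ → ℝ) (x y : ℕ → E) (k : ℕ) : ℝ :=
  ((k : ℝ) + 1) * (k + 2) * η k / 2 * (‖G (x k)‖ ^ 2 + L ^ 2 * ‖x k - y k‖ ^ 2) +
    (k + 1) * ⟪G (x k), x k - x 0⟫_ℝ

variable {G : E → E} {L : ℝ} {η : ℕ → ℝ} {x y : ℕ → E}

namespace IsAnchoredPopov

lemma norm_x_sub_y_succ_sq (h : IsAnchoredPopov G η x y) (k : ℕ) :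
    ‖x (k + 1) - y (k + 1)‖ ^ 2 = η k ^ 2 * ‖G (y k) - G (y (k + 1))‖ ^ 2 := by
  have hsub : x (k + 1) - y (k + 1) = η k • (G (y k) - G (y (k + 1))) := by
    rw [h.x_succ, h.y_succ]; module
  rw [hsub, norm_smul, mul_pow, Real.norm_eq_abs, sq_abs]

lemma inner_anchor_succ_le (h : IsAnchoredPopov G η x y)
    (hmono : ∀ a b, 0 ≤ ⟪G a - G b, a - b⟫_ℝ) (k : ℕ) :
    ((k : ℝ) + 2) * ⟪G (x (k + 1)), x (k + 1) - x 0⟫_ℝ ≤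
      (k + 1) * ⟪G (x k), x k - x 0⟫_ℝ + (k + 1) * (k + 2) * η k *
        (⟪G (x k), G (y (k + 1))⟫_ℝ -
          (1 + 1 / ((k : ℝ) + 1)) * ⟪G (x (k + 1)), G (y (k + 1))⟫_ℝ) := by
  have hincr : x (k + 1) - x k =
      (-(1 / ((k : ℝ) + 2))) • (x k - x 0) - η k • G (y (k + 1)) := by
    rw [h.x_succ]; module
  have hanchor : x (k + 1) - x 0 =
      (1 - 1 / ((k : ℝ) + 2)) • (x k - x 0) - η k • G (y (k + 1)) := by
    rw [h.x_succ]; module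
  have hmono' : 0 ≤ ((k : ℝ) + 1) * (k + 2) * ⟪G (x (k + 1)) - G (x k), x (k + 1) - x k⟫_ℝ :=
    mul_nonneg (by positivity) (hmono _ _)
  rw [hincr, inner_sub_right, inner_smul_right, inner_smul_right, inner_sub_left,
    inner_sub_left] at hmono'
  rw [hanchor, inner_sub_right, inner_smul_right, inner_smul_right, ← sub_nonneg]
  refine hmono'.trans_eq ?_
  field_simp
  ring

lemma popovLyapunov_succ_le (h : IsAnchoredPopov G η x y) (hL : 0 < L)
    (hη : IsPopovStepsize (4 * L ^ 2) η) (hmono : ∀ a b, 0 ≤ ⟪G a - G b, a - b⟫_ℝ)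
    (hLip : ∀ a b, ‖G a - G b‖ ≤ L * ‖a - b‖) (k : ℕ) :
    popovLyapunov G L η x y (k + 1) ≤ popovLyapunov G L η x y k := by
  obtain ⟨hpos, hlt⟩ := hη.pos_and_mul_sq_lt (by positivity) k
  have hsq (a b : E) : ‖G a - G b‖ ^ 2 ≤ L ^ 2 * ‖a - b‖ ^ 2 := by
    rw [← mul_pow]; exact pow_le_pow_left₀ (norm_nonneg _) (hLip a b) 2
  have hweight := hη.weight_succ (hlt.trans (by norm_num))
  have hinner := h.inner_anchor_succ_le hmono k
  set m := 4 * L ^ 2 * η k ^ 2 with hm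
  set c := ((k : ℝ) + 1) * (k + 2) * η k / 2
  have hxy : L ^ 2 * ‖x (k + 1) - y (k + 1)‖ ^ 2 = m / 4 * ‖G (y k) - G (y (k + 1))‖ ^ 2 := by
    rw [h.norm_x_sub_y_succ_sq, hm]; ring
  have hquad := popov_quadratic_le (u := G (x k)) (v := G (y k)) (by positivity : 0 < m)
    (by linarith) (1 / ((k : ℝ) + 1)) ((hsq (x (k + 1)) (y (k + 1))).trans_eq hxy)
  calc popovLyapunov G L η x y (k + 1)
      = ((k : ℝ) + 2) * (k + 3) * η (k + 1) / 2 *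
          (‖G (x (k + 1))‖ ^ 2 + L ^ 2 * ‖x (k + 1) - y (k + 1)‖ ^ 2) +
          (k + 2) * ⟪G (x (k + 1)), x (k + 1) - x 0⟫_ℝ := by
        rw [popovLyapunov]; push_cast; ring
    _ ≤ c * (popovGrowth m (1 / ((k : ℝ) + 1)) *
          (‖G (x (k + 1))‖ ^ 2 + m / 4 * ‖G (y k) - G (y (k + 1))‖ ^ 2) +
          2 * (⟪G (x k), G (y (k + 1))⟫_ℝ -
            (1 + 1 / ((k : ℝ) + 1)) * ⟪G (x (k + 1)), G (y (k + 1))⟫_ℝ)) +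
          (k + 1) * ⟪G (x k), x k - x 0⟫_ℝ := by
        rw [hweight, hxy]; linear_combination hinner
    _ ≤ c * (‖G (x k)‖ ^ 2 + ‖G (x k) - G (y k)‖ ^ 2) + (k + 1) * ⟪G (x k), x k - x 0⟫_ℝ := by
        gcongr
    _ ≤ popovLyapunov G L η x y k := by
        rw [popovLyapunov]
        gcongr
        exact hsq _ _

lemma popovLyapunov_zero (h : IsAnchoredPopov G η x y) :
    popovLyapunov G L η x y 0 = η 0 * ‖G (x 0)‖ ^ 2 := by
  simp [popovLyapunov, h.y_zero]

end IsAnchoredPopov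

lemma le_popovLyapunov {s : ℝ} (hs : 0 < s) {k : ℕ} (hsk : s ≤ η k) {z : E}
    (hz : 0 ≤ ⟪G (x k), x k - z⟫_ℝ) :
    s * (k + 1) * (k + 2) / 4 * (‖G (x k)‖ ^ 2 + 2 * L ^ 2 * ‖x k - y k‖ ^ 2) -
      1 / s * ‖x 0 - z‖ ^ 2 ≤ popovLyapunov G L η x y k := by
  set g := ‖G (x k)‖
  set D := ‖x 0 - z‖
  have hinner : -(g * D) ≤ ⟪G (x k), x k - x 0⟫_ℝ := by
    have hsplit : ⟪G (x k), x k - x 0⟫_ℝ = ⟪G (x k), x k - z⟫_ℝ - ⟪G (x k), x 0 - z⟫_ℝ := by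
      rw [← inner_sub_right, sub_sub_sub_cancel_right]
    linarith [real_inner_le_norm (G (x k)) (x 0 - z)]
  have hyoung : ((k : ℝ) + 1) * (g * D) ≤ s * (k + 1) * (k + 2) / 4 * g ^ 2 + 1 / s * D ^ 2 := by
    have hsquare : s * (k + 1) * (k + 2) / 4 * g ^ 2 + 1 / s * D ^ 2 - ((k : ℝ) + 1) * (g * D) =
        (s * (k + 1) / 2 * g - D) ^ 2 / s + s * (k + 1) / 4 * g ^ 2 := by
      field_simp; ring
    rw [← sub_nonneg, hsquare]
    positivity
  calc s * (k + 1) * (k + 2) / 4 * (g ^ 2 + 2 * L ^ 2 * ‖x k - y k‖ ^ 2) - 1 / s * D ^ 2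
      ≤ ((k : ℝ) + 1) * (k + 2) * s / 2 * (g ^ 2 + L ^ 2 * ‖x k - y k‖ ^ 2) +
          (k + 1) * -(g * D) := by linarith
    _ ≤ popovLyapunov G L η x y k := by rw [popovLyapunov]; gcongr

theorem anchored_popov_convergence_general (hL : 0 < L)
    (hmono : ∀ a b, 0 ≤ ⟪G a - G b, a - b⟫_ℝ) (hLip : ∀ a b, ‖G a - G b‖ ≤ L * ‖a - b‖)
    {xstar : E} (hstar : G xstar = 0) (hη : IsPopovStepsize (4 * L ^ 2) η)
    (h : IsAnchoredPopov G η x y) :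
    ∃ ηs : ℝ, 0 < ηs ∧ Tendsto η atTop (𝓝 ηs) ∧
      ∀ k : ℕ,
        ‖G (x k)‖ ^ 2 + 2 * L ^ 2 * ‖x k - y k‖ ^ 2 ≤
          4 / (ηs * ((k : ℝ) + 1) * ((k : ℝ) + 2)) *
            (η 0 * ‖G (x 0)‖ ^ 2 + (1 / ηs) * ‖x 0 - xstar‖ ^ 2) := by
  obtain ⟨ηs, hpos, hlim, hle⟩ := hη.exists_tendsto (by positivity)
  refine ⟨ηs, hpos, hlim, fun k ↦ ?_⟩
  have hdescent : popovLyapunov G L η x y k ≤ η 0 * ‖G (x 0)‖ ^ 2 :=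
    (antitone_nat_of_succ_le (h.popovLyapunov_succ_le hL hη hmono hLip) k.zero_le).trans_eq
      h.popovLyapunov_zero
  have hzero : 0 ≤ ⟪G (x k), x k - xstar⟫_ℝ := by
    simpa only [hstar, sub_zero] using hmono (x k) xstar
  have hlower := le_popovLyapunov (L := L) (y := y) hpos (hle k) hzero
  rw [div_mul_eq_mul_div, le_div_iff₀ (by positivity)]
  linarith

end InnerProductSpace

/-- Convergence rate of the anchored Popov method (Theorem 3.3): with `β_k = 1/(k+2)`,
`M = 4L²`, `0 < η_0 ≤ 1/(2L√3)`, the iterates satisfy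
`‖G(x_k)‖² + 2L²‖x_k − y_{k−1}‖² ≤ (4/(η⋆(k+1)(k+2)))[η_0‖G(x_0)‖² + ‖x_0 − x⋆‖²/η⋆]`,
where `η⋆ = lim η_k > 0`.  Here `y (k+1)` is the paper's `y_k` and `y 0 = x 0`. -/
theorem anchored_popov_convergence {p : ℕ}
    (G : EuclideanSpace ℝ (Fin p) → EuclideanSpace ℝ (Fin p))
    (L : ℝ) (hL : 0 < L)
    (hmono : ∀ x y, 0 ≤ ⟪G x - G y, x - y⟫_ℝ)
    (hLip : ∀ x y, ‖G x - G y‖ ≤ L * ‖x - y‖)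
    (xstar : EuclideanSpace ℝ (Fin p)) (hstar : G xstar = 0)
    (M : ℝ) (hM : M = 4 * L ^ 2)
    (η : ℕ → ℝ) (hη0 : 0 < η 0) (hη0' : η 0 ≤ 1 / (2 * L * Real.sqrt 3))
    (hrec : ∀ k : ℕ,
      η (k + 1) =
        (1 - (1 / ((k : ℝ) + 2)) ^ 2 - M * η k ^ 2) * (1 / ((k : ℝ) + 3)) * η k /
          ((1 - M * η k ^ 2) * (1 - 1 / ((k : ℝ) + 2)) * (1 / ((k : ℝ) + 2))))
    (x y : ℕ → EuclideanSpace ℝ (Fin p))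
    (hy0 : y 0 = x 0)
    (hy : ∀ k : ℕ, y (k + 1) =
      (1 / ((k : ℝ) + 2)) • x 0 + (1 - 1 / ((k : ℝ) + 2)) • x k - η k • G (y k))
    (hx : ∀ k : ℕ, x (k + 1) =
      (1 / ((k : ℝ) + 2)) • x 0 + (1 - 1 / ((k : ℝ) + 2)) • x k - η k • G (y (k + 1))) :
    ∃ ηs : ℝ, 0 < ηs ∧ Tendsto η atTop (𝓝 ηs) ∧
      ∀ k : ℕ,
        ‖G (x k)‖ ^ 2 + 2 * L ^ 2 * ‖x k - y k‖ ^ 2 ≤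
          4 / (ηs * ((k : ℝ) + 1) * ((k : ℝ) + 2)) *
            (η 0 * ‖G (x 0)‖ ^ 2 + (1 / ηs) * ‖x 0 - xstar‖ ^ 2) := by
  subst hM
  have hη : IsPopovStepsize (4 * L ^ 2) η :=
    ⟨hη0, (four_mul_sq_mul_sq_le hL hη0.le hη0').trans_lt (by norm_num), hrec⟩
  exact anchored_popov_convergence_general hL hmono hLip hstar hη ⟨hy0, hy, hx⟩
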